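/- Let k ≥ 1, let w(λ,x) be a nonnegative weight function that is totally positive of order k, let f : [0,∞) → [0,∞) be non-decreasing and Borel-measurable, and let λ₁ > λ₂ > ⋯ > λ_k > 0. Assume that X is a nonnegative random variable with probability density g, that E[w(λ_i,X)(f(X))^p] is finite for all i = 1,…,k and p = 0,1,…,k−1, and that E[w(λ_i,X)] > 0 for each i. Then every square minor of the k×k matrix with (i,j) entry H[λ_i,(f(X))^{k−j}] is nonnegative; i.e., for every 1 ≤ m ≤ k and all row indices r₁ < ⋯ < r_m and column indices c₁ < ⋯ < c_m, det( (H[λ_{r_i}, (f(X))^{k−c_j}])_{i,j=1}^m ) ≥ 0. -/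

import Mathlib

open MeasureTheory

/-!
Clearing the positive denominators row by row leaves the determinant of the moments
`∫ w(λᵢ, x) g(x) · f(x) ^ pⱼ dx`. By Andréief's identity this is, up to a factorial, the integral of
`det (w(λⱼ, xᵢ) g(xᵢ)) · det (f(xᵢ) ^ pⱼ)` over all tuples `x`. Sorting a tuple changes the signs of
both factors simultaneously, so it is enough to look at decreasing tuples: there the first factor is
nonnegative by total positivity, and the second is a generalized Vandermonde determinant at
decreasing nonnegative nodes with decreasing exponents.

Generalized Vandermonde determinants are nonnegative by induction on their size: once the smallest
power is factored out, one column is constant, and subtracting consecutive rows and writing the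
differences as integrals of derivatives turns the determinant into an integral of smaller
generalized Vandermonde determinants.
-/

section Integral

theorem ae_pi_forall_mem {ι : Type*} [Fintype ι] {X : ι → Type*} [∀ i, MeasurableSpace (X i)]
    {μ : ∀ i, Measure (X i)} [∀ i, SigmaFinite (μ i)] {S : ∀ i, Set (X i)}
    (hS : ∀ i, ∀ᵐ x ∂μ i, x ∈ S i) : ∀ᵐ x ∂Measure.pi μ, ∀ i, x i ∈ S i :=
  ae_all_iff.2 fun i => Measure.tendsto_eval_ae_ae.eventually (hS i)

theorem measurePreserving_comp_perm {ι X : Type*} [Fintype ι] [MeasurableSpace X] {μ : Measure X}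
    [SigmaFinite μ] (σ : Equiv.Perm ι) :
    MeasurePreserving (fun x : ι → X => x ∘ σ)
      (Measure.pi fun _ => μ) (Measure.pi fun _ => μ) := by
  convert! measurePreserving_piCongrLeft (fun _ : ι => μ) σ.symm using 1
  ext x i
  simpa using
    (MeasurableEquiv.piCongrLeft_apply_apply (β := fun _ : ι => X) σ.symm x (σ i)).symm

variable {ι 𝕜 : Type*} [Fintype ι] [DecidableEq ι] [RCLike 𝕜]

section Rows

variable {X : ι → Type*} [∀ i, MeasurableSpace (X i)] {μ : ∀ i, Measure (X i)}
  [∀ i, SigmaFinite (μ i)] {φ : ∀ i, ι → X i → 𝕜}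

theorem integrable_sign_mul_prod_pi (hφ : ∀ i j, Integrable (φ i j) (μ i)) (σ : Equiv.Perm ι) :
    Integrable (fun x : ∀ i, X i => ((σ.sign : ℤ) : 𝕜) * ∏ i, φ i (σ i) (x i))
      (Measure.pi μ) :=
  (Integrable.fintype_prod_dep fun i => hφ i (σ i)).const_mul _

theorem integrable_det_pi (hφ : ∀ i j, Integrable (φ i j) (μ i)) :
    Integrable (fun x : ∀ i, X i => Matrix.det (Matrix.of fun i j => φ i j (x i)))
      (Measure.pi μ) := by
  simp only [← Matrix.det_transpose (Matrix.of _), Matrix.det_apply', Matrix.transpose_apply,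
    Matrix.of_apply]
  exact integrable_finsetSum _ fun σ _ => integrable_sign_mul_prod_pi hφ σ

theorem integral_det_pi (hφ : ∀ i j, Integrable (φ i j) (μ i)) :
    ∫ x : ∀ i, X i, Matrix.det (Matrix.of fun i j => φ i j (x i)) ∂Measure.pi μ =
      Matrix.det (Matrix.of fun i j => ∫ x, φ i j x ∂μ i) := by
  simp only [← Matrix.det_transpose (Matrix.of _), Matrix.det_apply', Matrix.transpose_apply,
    Matrix.of_apply]
  rw [integral_finsetSum _ fun σ _ => integrable_sign_mul_prod_pi hφ σ]
  refine Finset.sum_congr rfl fun σ _ => ?_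
  rw [integral_const_mul, integral_fintype_prod_eq_prod fun i => φ i (σ i)]

end Rows

theorem sum_perm_det_mul_comp {R X : Type*} [CommRing R] (φ ψ : ι → X → R) (x : ι → X) :
    ∑ σ : Equiv.Perm ι, Matrix.det (Matrix.of fun i j => φ i (x (σ i)) * ψ j (x (σ i))) =
      Matrix.det (Matrix.of fun i j => φ j (x i)) *
        Matrix.det (Matrix.of fun i j => ψ j (x i)) := by
  rw [Matrix.det_apply', Finset.sum_mul]
  refine Finset.sum_congr rfl fun σ _ => ?_
  calc Matrix.det (Matrix.of fun i j => φ i (x (σ i)) * ψ j (x (σ i)))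
      = (∏ i, φ i (x (σ i))) *
          ((Matrix.of fun i j => ψ j (x i)).submatrix σ id).det :=
        Matrix.det_mul_column (fun i => φ i (x (σ i)))
          ((Matrix.of fun i j => ψ j (x i)).submatrix σ id)
    _ = σ.sign * (∏ i, φ i (x (σ i))) * Matrix.det (Matrix.of fun i j => ψ j (x i)) := by
        rw [Matrix.det_permute]
        ring

variable {X : Type*} [MeasurableSpace X] {μ : Measure X} [SigmaFinite μ]

theorem andreief_identity {φ ψ : ι → X → 𝕜}
    (hφψ : ∀ i j, Integrable (fun x => φ i x * ψ j x) μ) :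
    (Nat.factorial (Fintype.card ι) : 𝕜) *
        Matrix.det (Matrix.of fun i j => ∫ x, φ i x * ψ j x ∂μ) =
      ∫ x : ι → X, Matrix.det (Matrix.of fun i j => φ j (x i)) *
        Matrix.det (Matrix.of fun i j => ψ j (x i)) ∂Measure.pi fun _ => μ := by
  set F : (ι → X) → 𝕜 := fun x => Matrix.det (Matrix.of fun i j => φ i (x i) * ψ j (x i))
  have hF : Integrable F (Measure.pi fun _ => μ) := integrable_det_pi hφψ
  have integral_comp_perm (σ : Equiv.Perm ι) : ∫ x, F (x ∘ σ) ∂Measure.pi (fun _ => μ) =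
      Matrix.det (Matrix.of fun i j => ∫ x, φ i x * ψ j x ∂μ) := by
    have hσ := measurePreserving_comp_perm (μ := μ) σ
    calc ∫ x, F (x ∘ σ) ∂Measure.pi (fun _ => μ)
        = ∫ x, F x ∂(Measure.pi fun _ => μ).map (· ∘ σ) :=
          (integral_map hσ.aemeasurable (hσ.map_eq.symm ▸ hF.aestronglyMeasurable)).symm
      _ = ∫ x, F x ∂Measure.pi (fun _ => μ) := by rw [hσ.map_eq]
      _ = _ := integral_det_pi hφψ
  calc _ = ∑ σ : Equiv.Perm ι, ∫ x, F (x ∘ σ) ∂Measure.pi (fun _ => μ) := by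
        simp only [integral_comp_perm, Finset.sum_const, Finset.card_univ, Fintype.card_perm,
          nsmul_eq_mul]
    _ = ∫ x, ∑ σ : Equiv.Perm ι, F (x ∘ σ) ∂Measure.pi (fun _ => μ) :=
        (integral_finsetSum _ fun σ _ =>
          (measurePreserving_comp_perm σ).integrable_comp_of_integrable hF).symm
    _ = _ := integral_congr_ae (.of_forall (sum_perm_det_mul_comp φ ψ))

end Integral

theorem det_mul_det_nonneg_of_strictAnti {R α : Type*} [CommRing R] [PartialOrder R]
    [IsOrderedRing R] [LinearOrder α] {m : ℕ} {φ ψ : Fin m → α → R} {S : Set α}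
    (hφ : ∀ y : Fin m → α, StrictAnti y → (∀ i, y i ∈ S) →
      0 ≤ Matrix.det (Matrix.of fun i j => φ j (y i)))
    (hψ : ∀ y : Fin m → α, StrictAnti y → (∀ i, y i ∈ S) →
      0 ≤ Matrix.det (Matrix.of fun i j => ψ j (y i)))
    {x : Fin m → α} (hx : ∀ i, x i ∈ S) :
    0 ≤ Matrix.det (Matrix.of fun i j => φ j (x i)) *
      Matrix.det (Matrix.of fun i j => ψ j (x i)) := by
  by_cases hinj : Function.Injective x
  · set σ : Equiv.Perm (Fin m) := Tuple.sort (OrderDual.toDual ∘ x)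
    have hanti : Antitone (x ∘ σ) := Tuple.monotone_sort (OrderDual.toDual ∘ x)
    have hstrict : StrictAnti (x ∘ σ) := hanti.strictAnti_of_injective (hinj.comp σ.injective)
    have det_comp (χ : Fin m → α → R) : Matrix.det (Matrix.of fun i j => χ j ((x ∘ σ) i)) =
        σ.sign * Matrix.det (Matrix.of fun i j => χ j (x i)) :=
      Matrix.det_permute σ (Matrix.of fun i j => χ j (x i))
    have sign_mul_self : ((σ.sign : ℤ) : R) * ((σ.sign : ℤ) : R) = 1 := by
      rw [← Int.cast_mul, Int.units_coe_mul_self, Int.cast_one]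
    have hsorted := mul_nonneg (hφ _ hstrict fun i => hx _) (hψ _ hstrict fun i => hx _)
    rwa [det_comp, det_comp, mul_mul_mul_comm, sign_mul_self, one_mul] at hsorted
  · obtain ⟨a, b, hab, hne⟩ := Function.not_injective_iff.1 hinj
    have hzero : Matrix.det (Matrix.of fun i j => φ j (x i)) = 0 :=
      Matrix.det_zero_of_row_eq hne (by ext j; simp only [Matrix.of_apply, hab])
    rw [hzero, zero_mul]

theorem det_integral_mul_nonneg_of_strictAnti {α : Type*} [LinearOrder α] [MeasurableSpace α]
    {μ : Measure α} [SigmaFinite μ] {S : Set α} (hS : ∀ᵐ x ∂μ, x ∈ S) {m : ℕ}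
    {φ ψ : Fin m → α → ℝ} (hφψ : ∀ i j, Integrable (fun x => φ i x * ψ j x) μ)
    (hφ : ∀ y : Fin m → α, StrictAnti y → (∀ i, y i ∈ S) →
      0 ≤ Matrix.det (Matrix.of fun i j => φ j (y i)))
    (hψ : ∀ y : Fin m → α, StrictAnti y → (∀ i, y i ∈ S) →
      0 ≤ Matrix.det (Matrix.of fun i j => ψ j (y i))) :
    0 ≤ Matrix.det (Matrix.of fun i j => ∫ x, φ i x * ψ j x ∂μ) := by
  refine nonneg_of_mul_nonneg_right (a := (Nat.factorial (Fintype.card (Fin m)) : ℝ)) ?_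
    (by positivity)
  rw [andreief_identity hφψ]
  refine integral_nonneg_of_ae ?_
  filter_upwards [ae_pi_forall_mem fun _ => hS] with x hx
    using det_mul_det_nonneg_of_strictAnti hφ hψ hx

theorem det_eq_det_succ_sub_castSucc {R : Type*} [CommRing R] {n : ℕ}
    {A : Matrix (Fin (n + 1)) (Fin (n + 1)) R} (hA : ∀ i, A i 0 = 1) :
    A.det = Matrix.det (Matrix.of fun i j : Fin n => A i.succ j.succ - A i.castSucc j.succ) := by
  set B : Matrix (Fin (n + 1)) (Fin (n + 1)) R :=
    Matrix.of (Fin.cons (A 0) fun i j => A i.succ j - A i.castSucc j) with hB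
  have hAB : A.det = B.det :=
    Matrix.det_eq_of_forall_row_eq_smul_add_pred (fun _ => 1) (fun j => by simp [hB])
      fun i j => by simp [hB]
  have hB_zero : B 0 0 = 1 := hA 0
  have hB_succ (i : Fin n) : B i.succ 0 = 0 := by simp [hB, hA]
  rw [hAB, Matrix.det_succ_column_zero, Fin.sum_univ_succ]
  simp only [hB_zero, hB_succ, Fin.val_zero, pow_zero, mul_one, one_mul, mul_zero, zero_mul,
    Finset.sum_const_zero, add_zero]
  rfl

theorem det_nonneg_of_det_deriv_nonneg {n : ℕ} {F : Fin (n + 1) → ℝ → ℝ} {F' : Fin n → ℝ → ℝ}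
    (hF_zero : ∀ t, F 0 t = 1) (hF : ∀ j t, HasDerivAt (F (Fin.succ j)) (F' j t) t)
    (hF' : ∀ j, Continuous (F' j)) {y : Fin (n + 1) → ℝ} (hy : Monotone y)
    (hdet : ∀ t : Fin n → ℝ, (∀ i, t i ∈ Set.Ioc (y i.castSucc) (y i.succ)) →
      0 ≤ Matrix.det (Matrix.of fun i j => F' j (t i))) :
    0 ≤ Matrix.det (Matrix.of fun i j => F j (y i)) := by
  have hFTC (i j : Fin n) : F j.succ (y i.succ) - F j.succ (y i.castSucc) =
      ∫ t in Set.Ioc (y i.castSucc) (y i.succ), F' j t := by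
    rw [← intervalIntegral.integral_of_le (hy i.castSucc_lt_succ.le),
      intervalIntegral.integral_eq_sub_of_hasDerivAt (fun t _ => hF j t)
        ((hF' j).intervalIntegrable _ _)]
  rw [det_eq_det_succ_sub_castSucc fun i => hF_zero (y i)]
  simp only [Matrix.of_apply, hFTC]
  rw [← integral_det_pi fun _ j => (hF' j).integrableOn_Ioc]
  exact integral_nonneg_of_ae
    ((ae_pi_forall_mem fun _ => ae_restrict_mem measurableSet_Ioc).mono hdet)

theorem monotone_of_forall_mem_Ioc {α : Type*} [Preorder α] {n : ℕ} {y : Fin (n + 1) → α}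
    (hy : Monotone y) {t : Fin n → α} (ht : ∀ i, t i ∈ Set.Ioc (y i.castSucc) (y i.succ)) :
    Monotone t := by
  refine monotone_iff_forall_lt.2 fun a b hab => ?_
  calc t a ≤ y a.succ := (ht a).2
    _ ≤ y b.castSucc := hy (Fin.succ_le_castSucc_iff.2 hab)
    _ ≤ t b := (ht b).1.le

theorem det_pow_nonneg_of_monotone {m : ℕ} {y : Fin m → ℝ} (hy_nonneg : ∀ i, 0 ≤ y i)
    (hy : Monotone y) {p : Fin m → ℕ} (hp : StrictMono p) :
    0 ≤ Matrix.det (Matrix.of fun i j => y i ^ p j) := by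
  induction m with
  | zero => simp
  | succ m ih =>
    obtain ⟨q, hpq⟩ : ∃ q : Fin (m + 1) → ℕ, ∀ j, p j = p 0 + q j :=
      ⟨fun j => p j - p 0, fun j => (Nat.add_sub_of_le (hp.monotone (Fin.zero_le j))).symm⟩
    have hq_zero : q 0 = 0 := by have := hpq 0; omega
    have hq : StrictMono q := fun a b hab => by have := hp hab; have := hpq a; have := hpq b; omega
    have hq_pos (j : Fin m) : 0 < q j.succ := hq_zero ▸ hq j.succ_pos
    have hq_pred : StrictMono fun j : Fin m => q j.succ - 1 := fun a b hab =>
      Nat.sub_lt_sub_right (hq_pos a) (hq (Fin.succ_lt_succ_iff.2 hab))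
    have det_factor : Matrix.det (Matrix.of fun i j => y i ^ p j) =
        (∏ i, y i ^ p 0) * Matrix.det (Matrix.of fun i j => y i ^ q j) := by
      rw [← Matrix.det_mul_column]
      simp only [Matrix.of_apply, ← pow_add, ← hpq]
    rw [det_factor]
    refine mul_nonneg (Finset.prod_nonneg fun i _ => pow_nonneg (hy_nonneg i) _) ?_
    refine det_nonneg_of_det_deriv_nonneg (F := fun j t => t ^ q j)
      (F' := fun j t => q j.succ * t ^ (q j.succ - 1)) (fun t => by simp only [hq_zero, pow_zero])
      (fun j t => hasDerivAt_pow _ t) (fun j => by fun_prop) hy fun t ht => ?_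
    have hsmaller : 0 ≤ Matrix.det (Matrix.of fun i j : Fin m => t i ^ (q j.succ - 1)) :=
      ih (fun i => (hy_nonneg _).trans (ht i).1.le) (monotone_of_forall_mem_Ioc hy ht) hq_pred
    calc 0 ≤ (∏ j : Fin m, (q j.succ : ℝ)) *
          Matrix.det (Matrix.of fun i j : Fin m => t i ^ (q j.succ - 1)) :=
          mul_nonneg (Finset.prod_nonneg fun j _ => Nat.cast_nonneg _) hsmaller
      _ = _ := (Matrix.det_mul_row _ _).symm

theorem det_pow_nonneg_of_antitone {m : ℕ} {y : Fin m → ℝ} (hy_nonneg : ∀ i, 0 ≤ y i)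
    (hy : Antitone y) {p : Fin m → ℕ} (hp : StrictAnti p) :
    0 ≤ Matrix.det (Matrix.of fun i j => y i ^ p j) := by
  rw [← Matrix.det_submatrix_equiv_self Fin.revPerm]
  exact det_pow_nonneg_of_monotone (fun i => hy_nonneg i.rev) (hy.comp Fin.rev_anti)
    (hp.comp Fin.rev_strictAnti)

/-- Total positivity of order `k` (`TP_k`) of a kernel `w`, the second variable being restricted
to `S`. As in the paper, determinants are taken along decreasing tuples. -/
def IsTotallyPositiveOn {Λ α : Type*} [Preorder Λ] [Preorder α] (k : ℕ) (w : Λ → α → ℝ)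
    (S : Set α) : Prop :=
  ∀ r, 1 ≤ r → r ≤ k → ∀ (l : Fin r → Λ) (x : Fin r → α), StrictAnti l → StrictAnti x →
    (∀ i, x i ∈ S) → 0 ≤ Matrix.det (Matrix.of fun i j => w (l i) (x j))

/-- The generalized weighted premium `H[λ, h(X)]` of a random variable `X` with density `g` with
respect to `μ`; the argument `w` is the weight `w(λ, ·)`. -/
noncomputable def weightedPremium {α : Type*} [MeasurableSpace α] (μ : Measure α)
    (g w h : α → ℝ) : ℝ :=
  (∫ x, w x * h x * g x ∂μ) / ∫ x, w x * g x ∂μ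

theorem det_weightedPremium {α ι : Type*} [MeasurableSpace α] [Fintype ι] [DecidableEq ι]
    (μ : Measure α) (g : α → ℝ) (w h : ι → α → ℝ) :
    Matrix.det (Matrix.of fun i j => weightedPremium μ g (w i) (h j)) =
      (∏ i, (∫ x, w i x * g x ∂μ)⁻¹) *
        Matrix.det (Matrix.of fun i j => ∫ x, w i x * g x * h j x ∂μ) := by
  rw [← Matrix.det_mul_column]
  simp only [weightedPremium, Matrix.of_apply, div_eq_inv_mul, mul_right_comm]

theorem IsTotallyPositiveOn.det_mul_nonneg {Λ α : Type*} [Preorder Λ] [Preorder α] {k m : ℕ}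
    {w : Λ → α → ℝ} {S : Set α} (hw : IsTotallyPositiveOn k w S) (hmk : m ≤ k) {g : α → ℝ}
    (hg : ∀ x ∈ S, 0 ≤ g x) {l : Fin m → Λ} (hl : StrictAnti l) {x : Fin m → α}
    (hx : StrictAnti x) (hxS : ∀ i, x i ∈ S) :
    0 ≤ Matrix.det (Matrix.of fun i j => w (l j) (x i) * g (x i)) := by
  obtain rfl | hm := m.eq_zero_or_pos
  · simp
  calc 0 ≤ (∏ i, g (x i)) * Matrix.det (Matrix.of fun i j => w (l i) (x j)) :=
        mul_nonneg (Finset.prod_nonneg fun i _ => hg _ (hxS i)) (hw m hm hmk l x hl hx hxS)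
    _ = (∏ i, g (x i)) * Matrix.det (Matrix.of fun i j => w (l j) (x i)) := by
        rw [← Matrix.det_transpose]
        rfl
    _ = Matrix.det (Matrix.of fun i j => w (l j) (x i) * g (x i)) := by
        simp only [← Matrix.det_mul_column, Matrix.of_apply, mul_comm]

theorem stmt_0_general {Λ α : Type*} [Preorder Λ] [LinearOrder α] [MeasurableSpace α]
    {μ : Measure α} [SigmaFinite μ] {S : Set α} (hS : ∀ᵐ x ∂μ, x ∈ S) {k m : ℕ} (hmk : m ≤ k)
    {w : Λ → α → ℝ} (hw : IsTotallyPositiveOn k w S)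
    {f : α → ℝ} (hf_nonneg : ∀ x ∈ S, 0 ≤ f x) (hf_mono : MonotoneOn f S)
    {g : α → ℝ} (hg_nonneg : ∀ x ∈ S, 0 ≤ g x)
    {lam : Fin m → Λ} (hlam : StrictAnti lam) {p : Fin m → ℕ} (hp : StrictAnti p)
    (hInt : ∀ i j, Integrable (fun x => w (lam i) x * f x ^ p j * g x) μ)
    (hden_pos : ∀ i, 0 < ∫ x, w (lam i) x * g x ∂μ) :
    0 ≤ Matrix.det (Matrix.of fun i j =>
      weightedPremium μ g (w (lam i)) (fun x => f x ^ p j)) := by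
  rw [det_weightedPremium]
  refine mul_nonneg (Finset.prod_nonneg fun i _ => inv_nonneg.2 (hden_pos i).le) ?_
  refine det_integral_mul_nonneg_of_strictAnti hS (φ := fun i x => w (lam i) x * g x)
    (ψ := fun j x => f x ^ p j) (fun i j => ?_)
    (fun y hy hyS => hw.det_mul_nonneg hmk hg_nonneg hlam hy hyS) fun y hy hyS => ?_
  · simpa only [mul_right_comm] using hInt i j
  · exact det_pow_nonneg_of_antitone (fun i => hf_nonneg _ (hyS i))
      (fun a b hab => hf_mono (hyS b) (hyS a) (hy.antitone hab)) hp

/-- If the weight function `w` is totally positive of order `k`,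
`f : [0,∞) → [0,∞)` is non-decreasing and Borel measurable, `λ₁ > ⋯ > λ_k > 0`,
and the relevant expectations are finite with positive denominators, then every square
minor of the `k × k` matrix with `(i,j)` entry `H[λ_i, (f(X))^{k-j}]` is nonnegative. -/
theorem stmt_0
    (k : ℕ) (hk : 1 ≤ k)
    (w : ℝ → ℝ → ℝ) (hw_nonneg : ∀ l x : ℝ, 0 ≤ w l x)
    (hTP : ∀ r : ℕ, 1 ≤ r → r ≤ k → ∀ l x : Fin r → ℝ,
      (∀ i j : Fin r, i < j → l j < l i) →
      (∀ i j : Fin r, i < j → x j < x i) →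
      0 ≤ Matrix.det (Matrix.of fun i j : Fin r => w (l i) (x j)))
    (f : ℝ → ℝ) (hf_nonneg : ∀ x : ℝ, 0 ≤ x → 0 ≤ f x)
    (hf_mono : ∀ x y : ℝ, 0 ≤ x → x ≤ y → f x ≤ f y)
    (hf_meas : Measurable f)
    (lam : Fin k → ℝ) (hlam_pos : ∀ i : Fin k, 0 < lam i)
    (hlam_anti : ∀ i j : Fin k, i < j → lam j < lam i)
    (g : ℝ → ℝ) (hg_nonneg : ∀ x : ℝ, 0 ≤ g x) (hg_meas : Measurable g)
    (hg_prob : ∫ x in Set.Ici (0:ℝ), g x = 1)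
    (hInt : ∀ (i : Fin k) (p : ℕ), p ≤ k - 1 →
      IntegrableOn (fun x => w (lam i) x * f x ^ p * g x) (Set.Ici 0))
    (hden_pos : ∀ i : Fin k, 0 < ∫ x in Set.Ici (0:ℝ), w (lam i) x * g x) :
    ∀ m : ℕ, 1 ≤ m → m ≤ k → ∀ r c : Fin m → Fin k,
      (∀ i j : Fin m, i < j → r i < r j) →
      (∀ i j : Fin m, i < j → c i < c j) →
      0 ≤ Matrix.det (Matrix.of fun i j : Fin m =>
        (∫ x in Set.Ici (0:ℝ), w (lam (r i)) x * f x ^ (k - 1 - (c j : ℕ)) * g x) /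
        (∫ x in Set.Ici (0:ℝ), w (lam (r i)) x * g x)) := by
  intro m _ hmk r c hr hc
  have hp : StrictAnti fun j => k - 1 - (c j : ℕ) := fun a b hab => by
    have hab' : (c a : ℕ) < c b := hc a b hab
    exact Nat.sub_lt_sub_left (hab'.trans_le (Nat.le_sub_one_of_lt (c b).isLt)) hab'
  exact stmt_0_general (ae_restrict_mem measurableSet_Ici) hmk
    (fun n hn hnk l x hl hx _ => hTP n hn hnk l x (fun _ _ h => hl h) fun _ _ h => hx h)
    hf_nonneg (fun x hx y _ hxy => hf_mono x y hx hxy) (fun x _ => hg_nonneg x)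
    (fun _ _ h => hlam_anti _ _ (hr _ _ h)) hp (fun i j => hInt (r i) _ (Nat.sub_le _ _))
    fun i => hden_pos (r i)
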